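/- Let G be a group, S and T G-sets, and ρ : ℤ[S] → ℤ[T] a G-equivariant additive homomorphism. Suppose that S has finitely many G-orbits and that the stabilizer in G of each element of T is finite. Then for every integer n ≥ 1 and every y ∈ D_n, the set {x ∈ D₁ : x ∩_ρ y ≠ ∅} is finite. -/

import Mathlib

open Finsupp

/-- Action of `g : G` on the permutation module `ℤ[S]`, permuting the basis. -/
def gact {G S : Type*} [Group G] [MulAction G S] (g : G) (x : S →₀ ℤ) : S →₀ ℤ :=
  Finsupp.equivMapDomain (MulAction.toPerm g) x

/-- The ℓ1-norm on `ℤ[S]`. -/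
def l1 {S : Type*} (x : S →₀ ℤ) : ℕ := x.support.sum fun s => (x s).natAbs

/-- `x` is a part of `y`, written `x ⪯_S y`. -/
def IsPart {S : Type*} (x y : S →₀ ℤ) : Prop := ∀ s, x s ^ 2 ≤ x s * y s

/-- `x` and `y` have trivial S-intersection. -/
def SIntTrivial {S : Type*} (x y : S →₀ ℤ) : Prop := ∀ s, 0 ≤ x s * y s

/-- membership in `D₁ = S ∪ (-S) ⊆ ℤ[S]`. -/
def InD1 {S : Type*} (x : S →₀ ℤ) : Prop :=
  ∃ s, x = Finsupp.single s 1 ∨ x = Finsupp.single s (-1)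

/-- `x` and `y` have nontrivial ρ-intersection. -/
def RhoInt {S T : Type*} (ρ : (S →₀ ℤ) →+ (T →₀ ℤ)) (x y : S →₀ ℤ) : Prop :=
  ∃ x₁ y₁, InD1 x₁ ∧ InD1 y₁ ∧ IsPart x₁ x ∧ IsPart y₁ y ∧ ∃ t, ρ x₁ t * ρ y₁ t < 0

/-- membership in `D_n`. -/
def InD {S T : Type*} (ρ : (S →₀ ℤ) →+ (T →₀ ℤ)) (n : ℕ) (x : S →₀ ℤ) : Prop :=
  ∃ c : ℕ → (S →₀ ℤ), (∀ i < n, InD1 (c i)) ∧ x = ∑ i ∈ Finset.range n, c i ∧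
    ∀ k, 1 ≤ k → k < n →
      SIntTrivial (∑ i ∈ Finset.range k, c i) (c k) ∧
      RhoInt ρ (∑ i ∈ Finset.range k, c i) (c k)

/-- `x` is ρ-connected. -/
def RhoConnected {S T : Type*} (ρ : (S →₀ ℤ) →+ (T →₀ ℤ)) (x : S →₀ ℤ) : Prop :=
  ∃ n, 1 ≤ n ∧ InD ρ n x

/-- `ρ` is G-equivariant. -/
def Equivariant (G : Type*) {S T : Type*} [Group G] [MulAction G S] [MulAction G T]
    (ρ : (S →₀ ℤ) →+ (T →₀ ℤ)) : Prop :=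
  ∀ (g : G) (x : S →₀ ℤ), ρ (gact g x) = gact g (ρ x)

/-- `S` has finitely many G-orbits. -/
def FinitelyManyOrbits (G S : Type*) [Group G] [MulAction G S] : Prop :=
  ∃ R : Finset S, ∀ s : S, ∃ (g : G) (r : S), r ∈ R ∧ g • r = s

/-- every element of `T` has finite stabilizer. -/
def FiniteStabilizers (G T : Type*) [Group G] [MulAction G T] : Prop :=
  ∀ t : T, {g : G | g • t = t}.Finite

/-!
If `x ∈ D₁` has nontrivial ρ-intersection with `y`, then `x` is its own only part in `D₁`, so `ρ x`
and `ρ y₁` share a basis element `t` of `T` for some part `y₁` of `y`. There are finitely many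
choices of `y₁`, since parts of `y` lie coordinatewise between `0` and `y`, and hence of `t`. For
each `t` there are finitely many `x`: up to translation `x` comes from finitely many orbits, and
`g • u = t` has finitely many solutions `g` because the stabilizers in `T` are finite.
-/

section Action

variable {G S T : Type*} [Group G] [MulAction G S] [MulAction G T]

theorem finite_setOf_smul_eq {u : T} (hu : {g : G | g • u = u}.Finite) (t : T) :
    {g : G | g • u = t}.Finite := by
  rcases Set.eq_empty_or_nonempty {g : G | g • u = t} with hempty | ⟨g₀, rfl⟩
  · exact hempty ▸ Set.finite_empty
  · refine (hu.image (g₀ * ·)).subset fun g (hg : g • u = g₀ • u) ↦ ⟨g₀⁻¹ * g, ?_, by simp⟩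
    change (g₀⁻¹ * g) • u = u
    rw [mul_smul, hg, inv_smul_smul]

theorem finite_setOf_rel_of_smul_invariant (hS : FinitelyManyOrbits G S)
    (hT : FiniteStabilizers G T) {r : S → T → Prop}
    (hr : ∀ (g : G) {s : S} {t : T}, r s t → r (g • s) (g • t))
    (hfin : ∀ s, {t | r s t}.Finite) (t : T) : {s | r s t}.Finite := by
  obtain ⟨R, hR⟩ := hS
  have hcover : (⋃ a ∈ R, ⋃ u ∈ {u | r a u}, (· • a) '' {g : G | g • u = t}).Finite :=
    R.finite_toSet.biUnion fun a _ ↦ (hfin a).biUnion fun u _ ↦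
      (finite_setOf_smul_eq (hT u) t).image _
  refine hcover.subset fun s hs ↦ ?_
  obtain ⟨g, a, ha, rfl⟩ := hR s
  have hu : r a (g⁻¹ • t) := by simpa only [inv_smul_smul] using hr g⁻¹ hs
  simp only [Set.mem_iUnion]
  exact ⟨a, ha, g⁻¹ • t, hu, g, smul_inv_smul g t, rfl⟩

theorem gact_single (g : G) (s : S) (a : ℤ) : gact g (single s a) = single (g • s) a :=
  equivMapDomain_single _ s a

theorem gact_smul_apply (g : G) (x : S →₀ ℤ) (s : S) : gact g x (g • s) = x s := by
  simp [gact, equivMapDomain_apply]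

variable {ρ : (S →₀ ℤ) →+ (T →₀ ℤ)}

theorem Equivariant.apply_single_smul (hρ : Equivariant G ρ) (g : G) (s : S) (a : ℤ) (t : T) :
    ρ (single (g • s) a) (g • t) = ρ (single s a) t := by
  rw [← gact_single, hρ, gact_smul_apply]

theorem Equivariant.finite_setOf_apply_single_ne_zero (hρ : Equivariant G ρ)
    (hS : FinitelyManyOrbits G S) (hT : FiniteStabilizers G T) (a : ℤ) (t : T) :
    {s | ρ (single s a) t ≠ 0}.Finite :=
  finite_setOf_rel_of_smul_invariant (r := fun s t ↦ ρ (single s a) t ≠ 0) hS hT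
    (fun g s t h ↦ by rwa [hρ.apply_single_smul])
    (fun s ↦ (ρ (single s a)).hasFiniteSupport) t

theorem Equivariant.finite_setOf_inD1_apply_ne_zero (hρ : Equivariant G ρ)
    (hS : FinitelyManyOrbits G S) (hT : FiniteStabilizers G T) (t : T) :
    {x | InD1 x ∧ ρ x t ≠ 0}.Finite := by
  have hfin (a : ℤ) : ((single · a) '' {s | ρ (single s a) t ≠ 0}).Finite :=
    (hρ.finite_setOf_apply_single_ne_zero hS hT a t).image _
  refine ((hfin 1).union (hfin (-1))).subset ?_
  rintro _ ⟨⟨s, rfl | rfl⟩, hs⟩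
  · exact Or.inl ⟨s, hs, rfl⟩
  · exact Or.inr ⟨s, hs, rfl⟩

end Action

section Parts

variable {S T : Type*} {x y : S →₀ ℤ}

theorem IsPart.mem_Icc (h : IsPart x y) : x ∈ Set.Icc (0 ⊓ y) (0 ⊔ y) := by
  refine ⟨fun s ↦ ?_, fun s ↦ ?_⟩
  · rw [inf_apply, coe_zero, Pi.zero_apply, inf_le_iff]
    by_contra! hs
    nlinarith [h s]
  · rw [sup_apply, coe_zero, Pi.zero_apply, le_sup_iff]
    by_contra! hs
    nlinarith [h s]

theorem finite_setOf_isPart (y : S →₀ ℤ) : {x | IsPart x y}.Finite := by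
  classical
  exact (Set.finite_Icc (0 ⊓ y) (0 ⊔ y)).subset fun _ ↦ IsPart.mem_Icc

theorem IsPart.eq_of_inD1 (h : IsPart x y) (hx : InD1 x) (hy : InD1 y) : x = y := by
  obtain ⟨s, hx⟩ := hx
  obtain ⟨s', hy⟩ := hy
  have hs := h s
  obtain rfl : s' = s := by
    by_contra hne
    rcases hx with rfl | rfl <;> rcases hy with rfl | rfl <;> simp [hne] at hs
  rcases hx with rfl | rfl <;> rcases hy with rfl | rfl <;> simp at hs ⊢

theorem RhoInt.exists_isPart_of_inD1 {ρ : (S →₀ ℤ) →+ (T →₀ ℤ)} (h : RhoInt ρ x y)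
    (hx : InD1 x) : ∃ y₁, IsPart y₁ y ∧ ∃ t, ρ y₁ t ≠ 0 ∧ ρ x t ≠ 0 := by
  obtain ⟨x₁, y₁, hx₁, -, hpx, hpy, t, ht⟩ := h
  obtain rfl := hpx.eq_of_inD1 hx₁ hx
  exact ⟨y₁, hpy, t, right_ne_zero_of_mul ht.ne, left_ne_zero_of_mul ht.ne⟩

end Parts

theorem stmt_8_general {G S T : Type*} [Group G] [MulAction G S] [MulAction G T]
    (ρ : (S →₀ ℤ) →+ (T →₀ ℤ)) (hρ : Equivariant G ρ)
    (hS : FinitelyManyOrbits G S) (hstab : FiniteStabilizers G T) (y : S →₀ ℤ) :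
    {x : S →₀ ℤ | InD1 x ∧ RhoInt ρ x y}.Finite := by
  have hcover : (⋃ y₁ ∈ {y₁ | IsPart y₁ y}, ⋃ t ∈ (ρ y₁).support,
      {x | InD1 x ∧ ρ x t ≠ 0}).Finite :=
    (finite_setOf_isPart y).biUnion fun y₁ _ ↦ (ρ y₁).support.finite_toSet.biUnion fun t _ ↦
      hρ.finite_setOf_inD1_apply_ne_zero hS hstab t
  refine hcover.subset fun x ⟨hx, hxy⟩ ↦ ?_
  obtain ⟨y₁, hy₁, t, hy₁t, hxt⟩ := hxy.exists_isPart_of_inD1 hx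
  simp only [Set.mem_iUnion]
  exact ⟨y₁, hy₁, t, mem_support_iff.2 hy₁t, hx, hxt⟩

/-- Lemma: for `y ∈ D_n`, the set of elements of `D₁` having nontrivial
ρ-intersection with `y` is finite. -/
theorem stmt_8 {G S T : Type*} [Group G] [MulAction G S] [MulAction G T]
    (ρ : (S →₀ ℤ) →+ (T →₀ ℤ)) (hρ : Equivariant G ρ)
    (hS : FinitelyManyOrbits G S) (hstab : FiniteStabilizers G T) :
    ∀ n : ℕ, 1 ≤ n → ∀ y : S →₀ ℤ, InD ρ n y →
      {x : S →₀ ℤ | InD1 x ∧ RhoInt ρ x y}.Finite :=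
  fun _ _ y _ ↦ stmt_8_general ρ hρ hS hstab y
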